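/- arXiv:2309.09208 — 3 statements merged into one kernel-verified Lean document; each statement's English description precedes it below -/
import Mathlib

section
/- Let the system satisfy the uniform observability assumption with horizon N. Fix k₀ ∈ ℤ and a trajectory (x(k), u(k), y(k)) of the system (i.e. x(k+1) = f(x(k), u(k)) and y(k) = h(x(k)) for all k) such that x(k−N) ∈ 𝒳 and (u(k−N), …, u(k−1)) ∈ 𝒰^N for every k ≥ k₀. Let w(k) be the solution of the auxiliary system w(k+1) = f̃(w(k), v(k)) with output y_w(k) = h̃(w(k), v(k)), driven by the input v(k) = (u(k−N), …, u(k−1)) and initialized at w(k₀) = (y(k₀−N), …, y(k₀−1)). Then for every k ≥ k₀: w(k) = (y(k−N), …, y(k−1)), y_w(k) = y(k), and x(k) = ψ(w(k), v(k)). -/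
/-!
Along a trajectory of the system the iterated map reproduces the state: `F^k` applied to `x a` and
the inputs `u a, …, u (a + k - 1)` is `x (a + k)` (`Fiter_trajectory`). Hence the output window
`(y (k - N), …, y (k - 1))` is the image of `x (k - N)` under `Φ_N`; since `x (k - N) ∈ X`, the
left inverse `Ψ_N` recovers `x (k - N)` from it, and running the dynamics `N` steps forward gives
`ψ (w k) (v k) = x k` (`psiMap_window`). Consequently `h̃` returns the sample `y k`, and the
Brunovsky shift moves the window one step ahead, so by induction on `k ≥ k₀` the state `w k` is
the output window at every time.
-/

open Matrix Filter Topology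

noncomputable section

/-- Iterated composition of the dynamics: `Fiter f k x v = F^k(x, v₀, …, v_{k-1})`. -/
def Fiter {n : ℕ} (f : (Fin n → ℝ) → ℝ → (Fin n → ℝ)) :
    (k : ℕ) → (Fin n → ℝ) → (Fin k → ℝ) → (Fin n → ℝ)
  | 0, x, _ => x
  | k + 1, x, v => f (Fiter f k x (fun j => v j.castSucc)) (v (Fin.last k))

/-- The observability map `Φ_N(x, v₀, …, v_{N-2})`. -/
def Phi {n : ℕ} (f : (Fin n → ℝ) → ℝ → (Fin n → ℝ)) (h : (Fin n → ℝ) → ℝ)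
    (N : ℕ) (x : Fin n → ℝ) (v : Fin (N - 1) → ℝ) : Fin N → ℝ :=
  fun i => h (Fiter f i.val x (fun j => v ⟨j.val, by
    have h1 := j.isLt; have h2 := i.isLt; omega⟩))

/-- First `N-1` entries of a vector in `ℝ^N`. -/
def trunc {N : ℕ} {α : Type*} (v : Fin N → α) : Fin (N - 1) → α :=
  fun i => v ⟨i.val, by have := i.isLt; omega⟩

/-- `ψ(w, v) = F^N(Ψ_N(w, v_{[0,N-2]}), v)`. -/
def psiMap {n N : ℕ} (f : (Fin n → ℝ) → ℝ → (Fin n → ℝ))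
    (Psi : (Fin N → ℝ) → (Fin (N - 1) → ℝ) → (Fin n → ℝ))
    (w v : Fin N → ℝ) : Fin n → ℝ :=
  Fiter f N (Psi w (trunc v)) v

/-- `h̃(w, v) = h(ψ(w, v))`. -/
def htil {n N : ℕ} (f : (Fin n → ℝ) → ℝ → (Fin n → ℝ)) (h : (Fin n → ℝ) → ℝ)
    (Psi : (Fin N → ℝ) → (Fin (N - 1) → ℝ) → (Fin n → ℝ))
    (w v : Fin N → ℝ) : ℝ :=
  h (psiMap f Psi w v)

/-- Brunovsky shift: `A_c w + B_c s = (w₂, …, w_N, s)`. -/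
def brun {N : ℕ} (w : Fin N → ℝ) (s : ℝ) : Fin N → ℝ :=
  fun i => if h : i.val + 1 < N then w ⟨i.val + 1, h⟩ else s

/-- `f̃(w, v) = A_c w + B_c h̃(w, v)`. -/
def ftil {n N : ℕ} (f : (Fin n → ℝ) → ℝ → (Fin n → ℝ)) (h : (Fin n → ℝ) → ℝ)
    (Psi : (Fin N → ℝ) → (Fin (N - 1) → ℝ) → (Fin n → ℝ))
    (w v : Fin N → ℝ) : Fin N → ℝ :=
  brun w (htil f h Psi w v)

/-- Brunovsky matrix `A_c`. -/
def Ac (N : ℕ) : Matrix (Fin N) (Fin N) ℝ :=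
  Matrix.of fun i j => if i.val + 1 = j.val then 1 else 0

/-- Brunovsky vector `B_c`. -/
def Bc (N : ℕ) : Fin N → ℝ := fun i => if i.val = N - 1 then 1 else 0

/-- `A = blkdiag(A_c, A_c)`. -/
def Ablk (N : ℕ) : Matrix (Fin N ⊕ Fin N) (Fin N ⊕ Fin N) ℝ :=
  Matrix.fromBlocks (Ac N) 0 0 (Ac N)

/-- `B₁ = (0; B_c)`. -/
def B1 (N : ℕ) : (Fin N ⊕ Fin N) → ℝ := Sum.elim 0 (Bc N)

/-- `B₂ = (B_c; 0)`. -/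
def B2 (N : ℕ) : (Fin N ⊕ Fin N) → ℝ := Sum.elim (Bc N) 0

/-- Stacked matrix `[Y; V; Q]`. -/
def stack3 {N P T : ℕ} (Y V : Matrix (Fin N) (Fin T) ℝ) (Q : Matrix (Fin P) (Fin T) ℝ) :
    Matrix (Fin N ⊕ (Fin N ⊕ Fin P)) (Fin T) ℝ :=
  Matrix.fromRows Y (Matrix.fromRows V Q)

/-- Stacked matrix `[Y; V]`. -/
def stack2 {N T : ℕ} (Y V : Matrix (Fin N) (Fin T) ℝ) :
    Matrix (Fin N ⊕ Fin N) (Fin T) ℝ := Matrix.fromRows Y V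

/-- The dictionary vector `Z(w, ξ) = (w, ξ, Q(w, ξ))`. -/
def Zvec {N P : ℕ} (Q : (Fin N → ℝ) → (Fin N → ℝ) → (Fin P → ℝ)) (w ξ : Fin N → ℝ) :
    (Fin N ⊕ (Fin N ⊕ Fin P)) → ℝ :=
  Sum.elim w (Sum.elim ξ (Q w ξ))

/-- Concatenation of columns `[G₁ G₂]` (with the `S = N + (N + P)` index grouping). -/
def glue {T N P : ℕ} (G₁ : Matrix (Fin T) (Fin N ⊕ Fin N) ℝ) (G₂ : Matrix (Fin T) (Fin P) ℝ) :
    Matrix (Fin T) (Fin N ⊕ (Fin N ⊕ Fin P)) ℝ :=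
  Matrix.of fun t =>
    Sum.elim (fun a => G₁ t (Sum.inl a)) (Sum.elim (fun b => G₁ t (Sum.inr b)) (fun q => G₂ t q))

/-- Euclidean norm on a finite-dimensional coordinate space. -/
def enorm {ι : Type*} [Fintype ι] (z : ι → ℝ) : ℝ := Real.sqrt (∑ i, z i ^ 2)


theorem Fiter_trajectory {n : ℕ} (f : (Fin n → ℝ) → ℝ → (Fin n → ℝ))
    (x : ℤ → (Fin n → ℝ)) (u : ℤ → ℝ) (hdyn : ∀ k : ℤ, x (k + 1) = f (x k) (u k))
    (a : ℤ) (k : ℕ) :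
    Fiter f k (x a) (fun j => u (a + j.val)) = x (a + k) := by
  induction k with
  | zero => simp [Fiter]
  | succ k ih =>
    simp only [Fiter, Fin.val_castSucc, Fin.val_last]
    rw [ih, ← hdyn, Nat.cast_succ, add_assoc]

/-- On the output and input windows of a trajectory that start at time `a`, the map `ψ` returns the
state at time `a + N`: the output window is `Φ_N (x a)`, which `Ψ_N` inverts. -/
theorem psiMap_window {n N : ℕ} (f : (Fin n → ℝ) → ℝ → (Fin n → ℝ)) (h : (Fin n → ℝ) → ℝ)
    (X : Set (Fin n → ℝ)) (U : Set ℝ)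
    (Psi : (Fin N → ℝ) → (Fin (N - 1) → ℝ) → (Fin n → ℝ))
    (hPsi : ∀ v : Fin (N - 1) → ℝ, (∀ i, v i ∈ U) → ∀ x ∈ X, Psi (Phi f h N x v) v = x)
    (x : ℤ → (Fin n → ℝ)) (u y : ℤ → ℝ)
    (hdyn : ∀ k : ℤ, x (k + 1) = f (x k) (u k)) (hout : ∀ k : ℤ, y k = h (x k))
    (a : ℤ) (hxa : x a ∈ X) (hua : ∀ i : Fin N, u (a + i.val) ∈ U) :
    psiMap f Psi (fun i : Fin N => y (a + i.val)) (fun i => u (a + i.val)) = x (a + N) := by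
  have hPhi : (fun i : Fin N => y (a + i.val)) =
      Phi f h N (x a) (trunc fun i : Fin N => u (a + i.val)) := by
    funext i
    simp only [Phi, trunc]
    rw [Fiter_trajectory f x u hdyn, hout]
  rw [psiMap, hPhi, hPsi (trunc fun i : Fin N => u (a + i.val)) (fun i => hua _) _ hxa,
    Fiter_trajectory f x u hdyn]

/-- The Brunovsky shift with `y k` as new sample turns the window ending at `k - 1` into the one
ending at `k`. -/
theorem brun_window {N : ℕ} (y : ℤ → ℝ) (k : ℤ) :
    brun (fun i : Fin N => y (k - N + i.val)) (y k) = fun i => y (k + 1 - N + i.val) := by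
  funext i
  have hi := i.isLt
  unfold brun
  split_ifs with hlt
  · refine congrArg y ?_
    push_cast
    ring
  · refine congrArg y ?_
    -- the last index is `N - 1`, where the window entry is `y (k + 1 - N + (N - 1)) = y k`
    omega

/-- Lemma 1: equivalence of the auxiliary system and the original system. -/
theorem stmt_0 {n N : ℕ} (hN : 0 < N)
    (f : (Fin n → ℝ) → ℝ → (Fin n → ℝ)) (h : (Fin n → ℝ) → ℝ)
    (hf : Continuous fun p : (Fin n → ℝ) × ℝ => f p.1 p.2) (hh : Continuous h)
    (hf0 : f 0 0 = 0) (hh0 : h 0 = 0)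
    (X : Set (Fin n → ℝ)) (U : Set ℝ)
    (hXc : IsCompact X) (hUc : IsCompact U)
    (hX0 : (0 : Fin n → ℝ) ∈ X) (hU0 : (0 : ℝ) ∈ U)
    -- uniform observability with horizon N
    (hobs : ∀ v : Fin (N - 1) → ℝ, (∀ i, v i ∈ U) →
      Set.InjOn (fun x => Phi f h N x v) X)
    -- Ψ_N is the left inverse of Φ_N(·, v) on X
    (Psi : (Fin N → ℝ) → (Fin (N - 1) → ℝ) → (Fin n → ℝ))
    (hPsi : ∀ v : Fin (N - 1) → ℝ, (∀ i, v i ∈ U) →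
      ∀ x ∈ X, Psi (Phi f h N x v) v = x)
    -- a trajectory of the system
    (k₀ : ℤ) (x : ℤ → (Fin n → ℝ)) (u y : ℤ → ℝ)
    (hdyn : ∀ k : ℤ, x (k + 1) = f (x k) (u k))
    (hout : ∀ k : ℤ, y k = h (x k))
    (hxX : ∀ k ≥ k₀, x (k - N) ∈ X)
    (huU : ∀ k ≥ k₀, ∀ i : Fin N, u (k - N + i.val) ∈ U)
    -- the input fed to the auxiliary system: v(k) = (u(k-N), …, u(k-1))
    (v : ℤ → (Fin N → ℝ))
    (hv : ∀ k : ℤ, v k = fun i => u (k - N + i.val))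
    -- the solution of the auxiliary system w⁺ = f̃(w, v), w(k₀) = (y(k₀-N), …, y(k₀-1))
    (w : ℤ → (Fin N → ℝ))
    (hw0 : w k₀ = fun i => y (k₀ - N + i.val))
    (hwdyn : ∀ k ≥ k₀, w (k + 1) = ftil f h Psi (w k) (v k)) :
    ∀ k ≥ k₀, (w k = fun i => y (k - N + i.val)) ∧
      htil f h Psi (w k) (v k) = y k ∧
      psiMap f Psi (w k) (v k) = x k := by
  have hwindow : ∀ k ≥ k₀, psiMap f Psi (fun i : Fin N => y (k - N + i.val)) (v k) = x k := by
    intro k hk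
    rw [hv, psiMap_window f h X U Psi hPsi x u y hdyn hout (k - N) (hxX k hk) (huU k hk),
      sub_add_cancel]
  have hw : ∀ k ≥ k₀, w k = fun i => y (k - N + i.val) := by
    intro k hk
    induction k, hk using Int.leInduction with
    | base => exact hw0
    | succ k hk ih =>
      rw [hwdyn k hk, ftil, htil, ih, hwindow k hk, ← hout, brun_window]
  intro k hk
  have hpsi : psiMap f Psi (w k) (v k) = x k := by rw [hw k hk, hwindow k hk]
  exact ⟨hw k hk, by rw [htil, hpsi, hout], hpsi⟩
end
end

section
/- Let κ ∈ ℝ^{1×S} and G = [G₁ G₂] ∈ ℝ^{T×S}, with G₁ ∈ ℝ^{T×2N} and G₂ ∈ ℝ^{T×(S−2N)}, satisfy the relation [κ; I_S] = [U₀; Y₀; V₀; Q₀] G (stacking κ on top of the identity matrix, and U₀ on top of Y₀, V₀, Q₀). Then for every (w, ξ) ∈ ℝ^N × ℝ^N, A [w; ξ] + B₁ κ Z(w, ξ) + B₂ α Z(w, ξ) = M [w; ξ] + 𝒩 Q(w, ξ), where M = 𝒳₁ G₁ ∈ ℝ^{2N×2N} and 𝒩 = 𝒳₁ G₂ ∈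 ℝ^{2N×(S−2N)}; that is, the closed-loop system obtained feeding back u = κZ(w,ξ) admits the data-dependent representation [w⁺; ξ⁺] = M [w; ξ] + 𝒩 Q(w, ξ). -/
/-!
The point `t = G *ᵥ Z(w, ξ)` of `ℝ^T` selects a combination of the data columns. Since
`[Y₀; V₀; Q₀] G = 1`, the stacked data matrix sends `t` back to `Z(w, ξ)`, hence `[Y₀; V₀]` sends `t`
to `(w, ξ)`, while `U₀ ⬝ᵥ t = κ ⬝ᵥ Z(w, ξ)`. Applying the data identity to `t` therefore turns
`[Y₁; V₁] *ᵥ t` into the closed-loop right-hand side. Splitting the columns of `G` as `[G₁ G₂]`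
(`mulVec_Zvec`) writes the same vector as `M (w, ξ) + 𝒩 Q(w, ξ)`.
-/

open Matrix Filter Topology

noncomputable section

/-- Block form of `G Z(w, ξ)`: it equals `G₁ (w, ξ) + G₂ Q(w, ξ)` for `G = [G₁ G₂]`. -/
theorem mulVec_Zvec {N P T : ℕ} (G : Matrix (Fin T) (Fin N ⊕ (Fin N ⊕ Fin P)) ℝ)
    (Q : (Fin N → ℝ) → (Fin N → ℝ) → (Fin P → ℝ)) (w ξ : Fin N → ℝ) :
    G *ᵥ Zvec Q w ξ =
      G.submatrix id (Sum.map id Sum.inl) *ᵥ Sum.elim w ξ +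
        G.submatrix id (fun q : Fin P => Sum.inr (Sum.inr q)) *ᵥ Q w ξ := by
  ext t
  simp [Matrix.mulVec, dotProduct, Zvec, Fintype.sum_sum_type, add_assoc]

theorem stack2_mulVec_of_stack3 {N P T : ℕ} {Y V : Matrix (Fin N) (Fin T) ℝ}
    {Q₀ : Matrix (Fin P) (Fin T) ℝ} {Q : (Fin N → ℝ) → (Fin N → ℝ) → (Fin P → ℝ)}
    {w ξ : Fin N → ℝ} {t : Fin T → ℝ} (h : stack3 Y V Q₀ *ᵥ t = Zvec Q w ξ) :
    stack2 Y V *ᵥ t = Sum.elim w ξ := by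
  ext (i | i)
  · exact congrFun h (Sum.inl i)
  · exact congrFun h (Sum.inr (Sum.inl i))

/-- Lemma 2: data-dependent representation of the closed-loop system. -/
theorem stmt_5 {N T P : ℕ} (hN : 0 < N) (hP : 0 < P)
    (Q : (Fin N → ℝ) → (Fin N → ℝ) → (Fin P → ℝ))
    (hQ : Continuous fun p : (Fin N → ℝ) × (Fin N → ℝ) => Q p.1 p.2)
    (α : (Fin N ⊕ (Fin N ⊕ Fin P)) → ℝ)
    (Y₀ V₀ Y₁ V₁ : Matrix (Fin N) (Fin T) ℝ)
    (Q₀ : Matrix (Fin P) (Fin T) ℝ) (U₀ : Fin T → ℝ)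
    -- the data satisfy the identity [Y₁; V₁] = A [Y₀; V₀] + B₁ U₀ + B₂ α [Y₀; V₀; Q₀]
    (hdata : stack2 Y₁ V₁ =
      Ablk N * stack2 Y₀ V₀ + Matrix.vecMulVec (B1 N) U₀ +
        Matrix.vecMulVec (B2 N) (Matrix.vecMul α (stack3 Y₀ V₀ Q₀)))
    -- κ and G satisfy [κ; I_S] = [U₀; Y₀; V₀; Q₀] G
    (κ : (Fin N ⊕ (Fin N ⊕ Fin P)) → ℝ)
    (G : Matrix (Fin T) (Fin N ⊕ (Fin N ⊕ Fin P)) ℝ)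
    (hκ : Matrix.vecMul U₀ G = κ)
    (hG : stack3 Y₀ V₀ Q₀ * G = 1) :
    -- the closed-loop system [w⁺; ξ⁺] = A [w;ξ] + B₁ κZ(w,ξ) + B₂ αZ(w,ξ) equals
    -- M [w;ξ] + 𝒩 Q(w,ξ) with M = 𝒳₁ G₁ and 𝒩 = 𝒳₁ G₂
    ∀ w ξ : Fin N → ℝ,
      Ablk N *ᵥ Sum.elim w ξ + (κ ⬝ᵥ Zvec Q w ξ) • B1 N + (α ⬝ᵥ Zvec Q w ξ) • B2 N =
      (stack2 Y₁ V₁ * G.submatrix id (Sum.map id Sum.inl)) *ᵥ Sum.elim w ξ +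
      (stack2 Y₁ V₁ * G.submatrix id (fun q : Fin P => Sum.inr (Sum.inr q))) *ᵥ Q w ξ := by
  intro w ξ
  have hZ : stack3 Y₀ V₀ Q₀ *ᵥ (G *ᵥ Zvec Q w ξ) = Zvec Q w ξ := by
    rw [Matrix.mulVec_mulVec, hG, Matrix.one_mulVec]
  rw [← Matrix.mulVec_mulVec, ← Matrix.mulVec_mulVec, ← Matrix.mulVec_add, ← mulVec_Zvec, hdata,
    Matrix.add_mulVec, Matrix.add_mulVec, ← Matrix.mulVec_mulVec, stack2_mulVec_of_stack3 hZ,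
    Matrix.vecMulVec_mulVec, Matrix.vecMulVec_mulVec, Matrix.dotProduct_mulVec, hκ,
    ← Matrix.dotProduct_mulVec α, hZ]
  simp only [op_smul_eq_smul]
end
end

section
/- Suppose the matrices P₁ ∈ ℝ^{2N×2N} (symmetric), 𝒴₁ ∈ ℝ^{T×2N} and G₂ ∈ ℝ^{T×(S−2N)} satisfy: (a) [Y₀; V₀; Q₀] 𝒴₁ = [P₁; 0_{(S−2N)×2N}]; (b) the block matrix [[P₁, (𝒳₁𝒴₁)ᵀ], [𝒳₁𝒴₁, P₁]] is positive definite; (c) [Y₀; V₀; Q₀] G₂ = [0_{2N×(S−2N)}; I_{S−2N}]. Then P₁ is positive definite (hence invertible), and with G₁ := 𝒴₁ P₁⁻¹: (i) [Y₀; V₀; Q₀] [G₁ G₂] = I_S, and (ii) P₁⁻¹ − (𝒳₁ G₁)ᵀ P₁⁻¹ (𝒳₁ G₁) is positive definite. -/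
/-!
Write `W = 𝒳₁𝒴₁` and `M = [[P₁, Wᵀ], [W, P₁]] ≻ 0`. The matrix `P₁` is a principal block of `M`,
hence positive definite. The two equality constraints give the block columns of `[Y₀; V₀; Q₀] [G₁ G₂]`,
since `P₁ P₁⁻¹ = 1`. Finally, with `K = [P₁⁻¹; -P₁⁻¹ W P₁⁻¹]`, whose columns are linearly
independent because its top block is invertible, the congruence `Kᵀ M K` equals
`P₁⁻¹ - (W P₁⁻¹)ᵀ P₁⁻¹ (W P₁⁻¹)`, the Schur complement of `M` transported by `P₁⁻¹`.
-/

open Matrix Filter Topology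

noncomputable section

/-- The congruence of `[[A, Wᵀ], [W, A]]` by `[A⁻¹; -A⁻¹ W A⁻¹]`. -/
lemma posDef_inv_sub {n : Type*} [Fintype n] [DecidableEq n] {A W : Matrix n n ℝ}
    (hA : A.PosDef) (hM : (fromBlocks A Wᵀ W A).PosDef) :
    (A⁻¹ - (W * A⁻¹)ᵀ * A⁻¹ * (W * A⁻¹)).PosDef := by
  have hu : IsUnit A.det := (isUnit_iff_isUnit_det A).mp hA.isUnit
  have hAt : Aᵀ = A := by simpa [IsHermitian] using hA.1
  have hAit : (A⁻¹)ᵀ = A⁻¹ := by rw [transpose_nonsing_inv, hAt]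
  have hinj : Function.Injective (fromRows A⁻¹ (-(A⁻¹ * W * A⁻¹))).mulVec := by
    intro x y hxy
    have htop : A⁻¹ *ᵥ x = A⁻¹ *ᵥ y := by
      rw [fromRows_mulVec, fromRows_mulVec] at hxy
      exact (Sum.elim_eq_iff.mp hxy).1
    have h := congrArg (A *ᵥ ·) htop
    simpa [mulVec_mulVec, mul_nonsing_inv A hu] using h
  have h := hM.conjTranspose_mul_mul_same hinj
  have hMK : fromBlocks A Wᵀ W A * fromRows A⁻¹ (-(A⁻¹ * W * A⁻¹)) =
      fromRows (1 - Wᵀ * (A⁻¹ * W * A⁻¹)) 0 := by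
    rw [fromBlocks_mul_fromRows, mul_nonsing_inv A hu]
    congr 1
    · simp [sub_eq_add_neg]
    · rw [Matrix.mul_neg, Matrix.mul_assoc A⁻¹, mul_nonsing_inv_cancel_left _ _ hu, add_neg_cancel]
  rw [Matrix.mul_assoc, hMK, conjTranspose_eq_transpose_of_trivial, transpose_fromRows,
    fromCols_mul_fromRows, hAit, Matrix.mul_zero, add_zero] at h
  convert h using 1
  rw [transpose_mul, hAit, Matrix.mul_sub, Matrix.mul_one]
  simp only [Matrix.mul_assoc]

/-- consequences of feasibility of the SDP. -/
theorem stmt_6 {N T P : ℕ} (hN : 0 < N) (hP : 0 < P)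
    (Y₀ V₀ Y₁ V₁ : Matrix (Fin N) (Fin T) ℝ)
    (Q₀ : Matrix (Fin P) (Fin T) ℝ)
    (P₁ : Matrix (Fin N ⊕ Fin N) (Fin N ⊕ Fin N) ℝ) (hP₁symm : P₁.IsSymm)
    (𝒴₁ : Matrix (Fin T) (Fin N ⊕ Fin N) ℝ)
    (G₂ : Matrix (Fin T) (Fin P) ℝ)
    -- (a) [Y₀; V₀; Q₀] 𝒴₁ = [P₁; 0]
    (ha1 : (stack3 Y₀ V₀ Q₀ * 𝒴₁).submatrix (Sum.map id Sum.inl) id = P₁)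
    (ha2 : (stack3 Y₀ V₀ Q₀ * 𝒴₁).submatrix (fun q : Fin P => Sum.inr (Sum.inr q)) id = 0)
    -- (b) [[P₁, (𝒳₁𝒴₁)ᵀ], [𝒳₁𝒴₁, P₁]] ≻ 0
    (hb : (Matrix.fromBlocks P₁ (stack2 Y₁ V₁ * 𝒴₁)ᵀ (stack2 Y₁ V₁ * 𝒴₁) P₁).PosDef)
    -- (c) [Y₀; V₀; Q₀] G₂ = [0; I]
    (hc1 : (stack3 Y₀ V₀ Q₀ * G₂).submatrix (Sum.map id Sum.inl) id = 0)
    (hc2 : (stack3 Y₀ V₀ Q₀ * G₂).submatrix (fun q : Fin P => Sum.inr (Sum.inr q)) id = 1) :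
    -- P₁ ≻ 0 and, with G₁ := 𝒴₁ P₁⁻¹, [Y₀; V₀; Q₀] [G₁ G₂] = I_S and
    -- P₁⁻¹ − (𝒳₁G₁)ᵀ P₁⁻¹ (𝒳₁G₁) ≻ 0
    P₁.PosDef ∧
    stack3 Y₀ V₀ Q₀ * glue (𝒴₁ * P₁⁻¹) G₂ = 1 ∧
    (P₁⁻¹ - (stack2 Y₁ V₁ * (𝒴₁ * P₁⁻¹))ᵀ * P₁⁻¹ * (stack2 Y₁ V₁ * (𝒴₁ * P₁⁻¹))).PosDef := by
  have hP : P₁.PosDef := by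
    have h := hb.submatrix (e := Sum.inl) Sum.inl_injective
    rwa [show (fromBlocks P₁ _ _ P₁).submatrix Sum.inl Sum.inl = P₁ from rfl] at h
  have hu : IsUnit P₁.det := (isUnit_iff_isUnit_det P₁).mp hP.isUnit
  refine ⟨hP, ?_, ?_⟩
  -- `[G₁ G₂]` is `fromCols G₁ G₂` up to reassociating the column index, and each product
  -- with the stacked data matrix is determined by its first `2N` and its last `P` rows.
  · have hglue : ∀ G₁ : Matrix (Fin T) (Fin N ⊕ Fin N) ℝ,
        glue G₁ G₂ = (fromCols G₁ G₂).submatrix id (Equiv.sumAssoc _ _ _).symm := by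
      intro G₁
      ext t (a | b | q) <;> rfl
    have hstack : ∀ {m : Type} (B : Matrix (Fin T) m ℝ),
        stack3 Y₀ V₀ Q₀ * B = (fromRows
          ((stack3 Y₀ V₀ Q₀ * B).submatrix (Sum.map id Sum.inl) id)
          ((stack3 Y₀ V₀ Q₀ * B).submatrix (fun q : Fin P => Sum.inr (Sum.inr q)) id)).submatrix
            (Equiv.sumAssoc _ _ _).symm id := by
      intro m B
      ext (a | b | q) j <;> rfl
    have h1 := hstack 𝒴₁
    have h2 := hstack G₂
    rw [ha1, ha2] at h1
    rw [hc1, hc2] at h2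
    have h3 : stack3 Y₀ V₀ Q₀ * (𝒴₁ * P₁⁻¹) =
        (fromRows 1 0).submatrix (Equiv.sumAssoc _ _ _).symm id := by
      rw [← Matrix.mul_assoc, h1, ← mul_nonsing_inv P₁ hu]
      ext (a | b | q) j <;> simp [Matrix.mul_apply]
    have h4 : stack3 Y₀ V₀ Q₀ * fromCols (𝒴₁ * P₁⁻¹) G₂ =
        (1 : Matrix ((Fin N ⊕ Fin N) ⊕ Fin P) _ ℝ).submatrix (Equiv.sumAssoc _ _ _).symm id := by
      rw [mul_fromCols, h3, h2, ← fromBlocks_one (l := Fin N ⊕ Fin N) (m := Fin P),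
        ← fromCols_fromRows_eq_fromBlocks]
      ext i (j | j) <;> rfl
    have h5 : stack3 Y₀ V₀ Q₀ * glue (𝒴₁ * P₁⁻¹) G₂ =
        (stack3 Y₀ V₀ Q₀ * fromCols (𝒴₁ * P₁⁻¹) G₂).submatrix id
          (Equiv.sumAssoc _ _ _).symm := by
      rw [hglue]
      rfl
    rw [h5, h4, submatrix_submatrix]
    exact submatrix_one_equiv _
  · rw [← Matrix.mul_assoc (stack2 Y₁ V₁)]
    exact posDef_inv_sub hP hb
end
end
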